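/- arXiv:2002.04258 — 5 statements merged into one kernel-verified Lean document; each statement's English description precedes it below -/
import Mathlib

section
/- Let β_D : S × D → [0,∞) and β : S × A → [0,∞). Suppose 0 ≤ c_e(s,a) + c_c(d') + c_x(d',d) ≤ 1 for all s,a,d,d', and let (P_D, P) and (P^k_D, P^k) be two pairs of agent-policy/transition families such that ‖p_d(·|s,t) − p^k_d(·|s,t)‖₁ ≤ min{1, β_D(s,d)} for all d,s,t and ‖p(·|s,a,t) − p^k(·|s,a,t)‖₁ ≤ min{1, β(s,a)} for all s,a,t. Then for every switching policy π and every (s,d) ∈ S × D, V^π_{1|P_D,P}(s,d) − V^π_{1|P^k_D,P^k}(s,d) ≤ L · E_{π,P_D,P}[ Σ_{t=1}^{L} min{1, β_D(s_t,d_t)} + Σ_{t=1}^{L} min{1, β(s_t,a_t)} | s_1 = s, d_0 = d ], where the expectation is under the trajectory distribution induced by π and the first pair (P_D,P). -/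
/-!
The proof is the classical simulation argument, by induction on the number `n` of remaining steps.
With `f a = C + c_e(s,a) + Σ P V` and `g a` its analogue for the second pair (`C` the control and
switching cost, which moves inside the sum over actions because each agent policy has mass one),

  `Σ p f - Σ q g = Σ (p - q) g + Σ p (f - g)`  and
  `f - g = Σ (P - Pk) Vk + Σ P (V - Vk)`.

Since the total cost of a step lies in `[0, 1]`, the second value function lies in `[0, n]`
(`switchVal_mem_Icc`), so the two error terms are at most `L` times the bonuses of the current step
(`sum_mul_sub_sum_mul_le`, used once for actions and once for next states).
The remaining term is an average, under the first pair, of the value difference one step later.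
The expected bonus satisfies the same one-step recursion (`expBonus_succ`), which follows by
splitting a trajectory into its first step and the rest and using that trajectory probabilities
sum to one (`sum_trajProb`).
-/

open Finset

/-- `p` is a probability vector on a finite type. -/
def IsProbVec {α : Type*} [Fintype α] (p : α → ℝ) : Prop :=
  (∀ x, 0 ≤ p x) ∧ ∑ x, p x = 1

/-- Value function of a switching policy, defined by backward recursion.
`switchVal PD P ce cc cx π n t s d` is the value at time `t` with `n` remaining
steps (so `V^π_{1|P_D,P}(s,d)` in a horizon-`L` problem is obtained with
`n = L`, `t = 1`). -/
noncomputable def switchVal {S A D : Type*} [Fintype S] [Fintype A] [Fintype D]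
    (PD : D → S → ℕ → A → ℝ) (P : S → A → ℕ → S → ℝ)
    (ce : S → A → ℝ) (cc : D → ℝ) (cx : D → D → ℝ)
    (π : ℕ → S → D → D) : ℕ → ℕ → S → D → ℝ
  | 0, _, _, _ => 0
  | n + 1, t, s, d =>
      (cc (π t s d) + cx (π t s d) d) +
        ∑ a, PD (π t s d) s t a *
          (ce s a + ∑ s', P s a t s' * switchVal PD P ce cc cx π n (t + 1) s' (π t s d))

/-- Probability of a trajectory (list of (action, next-state) pairs) started
at time `t` from state `s` with previous agent `d`, under the trajectory
distribution induced by the switching policy `π`, agent policies `PD` and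
transition probabilities `P`. -/
noncomputable def trajProb {S A D : Type*}
    (PD : D → S → ℕ → A → ℝ) (P : S → A → ℕ → S → ℝ)
    (π : ℕ → S → D → D) : List (A × S) → ℕ → S → D → ℝ
  | [], _, _, _ => 1
  | (a, s') :: rest, t, s, d =>
      PD (π t s d) s t a * P s a t s' * trajProb PD P π rest (t + 1) s' (π t s d)

/-- Accumulated bonus `Σ_τ ( min{1, β_D(s_τ,d_τ)} + min{1, β(s_τ,a_τ)} )`
of a trajectory started at time `t` from `(s, d)`. -/
noncomputable def bonusCost {S A D : Type*} (βD : S → D → ℝ) (β : S → A → ℝ)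
    (π : ℕ → S → D → D) : List (A × S) → ℕ → S → D → ℝ
  | [], _, _, _ => 0
  | (a, s') :: rest, t, s, d =>
      (min 1 (βD s (π t s d)) + min 1 (β s a)) +
        bonusCost βD β π rest (t + 1) s' (π t s d)

/-- Averaging under two vectors `p`, `q` on a finite type: the difference of the averages is
controlled by the `ℓ¹` distance of the vectors and the average under `p` of the pointwise bounds. -/
lemma sum_mul_sub_sum_mul_le {α : Type*} [Fintype α] {p q f g h : α → ℝ} {M b : ℝ}
    (hp : ∀ x, 0 ≤ p x) (hM : 0 ≤ M) (hg : ∀ x, g x ∈ Set.Icc 0 M)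
    (hpq : ∑ x, |p x - q x| ≤ b) (hfg : ∀ x, f x - g x ≤ h x) :
    ∑ x, p x * f x - ∑ x, q x * g x ≤ M * b + ∑ x, p x * h x := by
  have h1 : ∑ x, |p x - q x| * M ≤ M * b := by
    rw [← Finset.sum_mul, mul_comm]
    exact mul_le_mul_of_nonneg_left hpq hM
  have h2 : ∑ x, p x * f x - ∑ x, q x * g x ≤ ∑ x, |p x - q x| * M + ∑ x, p x * h x := by
    rw [← Finset.sum_sub_distrib, ← Finset.sum_add_distrib]
    refine Finset.sum_le_sum fun x _ => ?_
    have h3 := mul_le_mul_of_nonneg_left (hfg x) (hp x)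
    have h4 : (p x - q x) * g x ≤ |p x - q x| * M :=
      mul_le_mul (le_abs_self _) (hg x).2 (hg x).1 (abs_nonneg _)
    linarith
  linarith

lemma IsProbVec.sum_mul_mem_Icc {α : Type*} [Fintype α] {p f : α → ℝ} (hp : IsProbVec p) {M : ℝ}
    (hf : ∀ x, f x ∈ Set.Icc 0 M) : ∑ x, p x * f x ∈ Set.Icc 0 M := by
  refine ⟨Finset.sum_nonneg fun x _ => mul_nonneg (hp.1 x) (hf x).1, ?_⟩
  calc ∑ x, p x * f x ≤ ∑ x, p x * M :=
        Finset.sum_le_sum fun x _ => mul_le_mul_of_nonneg_left (hf x).2 (hp.1 x)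
    _ = M := by rw [← Finset.sum_mul, hp.2, one_mul]

lemma IsProbVec.sum_mul_const_add {α : Type*} [Fintype α] {p : α → ℝ} (hp : IsProbVec p)
    (c : ℝ) (f : α → ℝ) : ∑ x, p x * (c + f x) = c + ∑ x, p x * f x := by
  simp only [mul_add, Finset.sum_add_distrib]
  rw [← Finset.sum_mul, hp.2, one_mul]

/-- Splitting a trajectory of length `n + 1` into its first step and the remaining `n` steps. -/
lemma sum_ofFn_succ {S A : Type*} [Fintype S] [Fintype A] (n : ℕ) (F : List (A × S) → ℝ) :
    ∑ τ : Fin (n + 1) → A × S, F (List.ofFn τ) =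
      ∑ a, ∑ s', ∑ τ : Fin n → A × S, F ((a, s') :: List.ofFn τ) := by
  rw [← (Fin.consEquiv fun _ : Fin (n + 1) => A × S).sum_comp, Fintype.sum_prod_type,
    Fintype.sum_prod_type]
  simp [Fin.consEquiv, List.ofFn_succ]

section

variable {S A D : Type*} [Fintype S] [Fintype A]
  {PD : D → S → ℕ → A → ℝ} {P : S → A → ℕ → S → ℝ}

lemma sum_trajProb {L : ℕ}
    (hPD : ∀ d s t, 1 ≤ t → t ≤ L → IsProbVec (PD d s t))
    (hP : ∀ s a t, 1 ≤ t → t ≤ L → IsProbVec (P s a t))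
    (π : ℕ → S → D → D) (n t : ℕ) (ht : 1 ≤ t) (hn : t + n ≤ L + 1) (s : S) (d : D) :
    ∑ τ : Fin n → A × S, trajProb PD P π (List.ofFn τ) t s d = 1 := by
  induction n generalizing t s d with
  | zero => simp [trajProb]
  | succ n ih =>
    rw [sum_ofFn_succ n fun l => trajProb PD P π l t s d]
    simp only [trajProb, ← Finset.mul_sum]
    simp only [ih (t + 1) (by omega) (by omega), mul_one, ← Finset.mul_sum]
    simp only [(hP s _ t ht (by omega)).2, mul_one]
    exact (hPD _ s t ht (by omega)).2

/-- The expected accumulated bonus over `n` steps started at time `t` from `(s, d)`. -/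
noncomputable def expBonus (PD : D → S → ℕ → A → ℝ) (P : S → A → ℕ → S → ℝ)
    (βD : S → D → ℝ) (β : S → A → ℝ) (π : ℕ → S → D → D) (n t : ℕ) (s : S) (d : D) : ℝ :=
  ∑ τ : Fin n → A × S,
    trajProb PD P π (List.ofFn τ) t s d * bonusCost βD β π (List.ofFn τ) t s d

lemma expBonus_succ {L : ℕ}
    (hPD : ∀ d s t, 1 ≤ t → t ≤ L → IsProbVec (PD d s t))
    (hP : ∀ s a t, 1 ≤ t → t ≤ L → IsProbVec (P s a t))
    (βD : S → D → ℝ) (β : S → A → ℝ) (π : ℕ → S → D → D)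
    (n t : ℕ) (ht : 1 ≤ t) (hn : t + (n + 1) ≤ L + 1) (s : S) (d : D) :
    expBonus PD P βD β π (n + 1) t s d =
      min 1 (βD s (π t s d)) + ∑ a, PD (π t s d) s t a *
        (min 1 (β s a) + ∑ s', P s a t s' * expBonus PD P βD β π n (t + 1) s' (π t s d)) := by
  rw [expBonus, sum_ofFn_succ n fun l => trajProb PD P π l t s d * bonusCost βD β π l t s d,
    ← (hPD (π t s d) s t ht (by omega)).sum_mul_const_add]
  refine Finset.sum_congr rfl fun a _ => ?_
  rw [← (hP s a t ht (by omega)).sum_mul_const_add, ← (hP s a t ht (by omega)).sum_mul_const_add,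
    Finset.mul_sum]
  refine Finset.sum_congr rfl fun s' _ => ?_
  have h1 := sum_trajProb hPD hP π n (t + 1) (by omega) (by omega) s' (π t s d)
  simp only [trajProb, bonusCost, mul_assoc, mul_add, Finset.sum_add_distrib, ← Finset.mul_sum,
    ← Finset.sum_mul, h1, expBonus]
  ring

variable [Fintype D]

/-- Per-step total costs in `[0, 1]` force the value with `n` remaining steps into `[0, n]`; the
environment and control costs need not be bounded separately. -/
lemma switchVal_mem_Icc {L : ℕ}
    (hPD : ∀ d s t, 1 ≤ t → t ≤ L → IsProbVec (PD d s t))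
    (hP : ∀ s a t, 1 ≤ t → t ≤ L → IsProbVec (P s a t))
    {ce : S → A → ℝ} {cc : D → ℝ} {cx : D → D → ℝ}
    (hcost : ∀ s a d d', 0 ≤ ce s a + cc d' + cx d' d ∧ ce s a + cc d' + cx d' d ≤ 1)
    (π : ℕ → S → D → D) (n t : ℕ) (ht : 1 ≤ t) (hn : t + n ≤ L + 1) (s : S) (d : D) :
    switchVal PD P ce cc cx π n t s d ∈ Set.Icc 0 (n : ℝ) := by
  induction n generalizing t s d with
  | zero => simp [switchVal]
  | succ n ih =>
    rw [switchVal, ← (hPD (π t s d) s t ht (by omega)).sum_mul_const_add]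
    refine (hPD (π t s d) s t ht (by omega)).sum_mul_mem_Icc fun a => ?_
    have h1 := (hP s a t ht (by omega)).sum_mul_mem_Icc
      fun s' => ih (t + 1) (by omega) (by omega) s' (π t s d)
    have h2 := hcost s a d (π t s d)
    push_cast
    constructor <;> linarith [h1.1, h1.2]

end

/-- simulation lemma. If all per-step costs lie in `[0,1]` and
the two pairs of families are pointwise ℓ¹-close (within `min{1, β_D}` resp.
`min{1, β}`), then the difference of the two value functions at time `1` is
bounded by `L` times the expected accumulated bonus along trajectories induced
by `π` and the first pair `(P_D, P)`. -/
theorem value_difference_bound {S A D : Type*}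
    [Fintype S] [Fintype A] [Fintype D] [Nonempty S] [Nonempty A] [Nonempty D]
    (L : ℕ) (hL : 1 ≤ L)
    (βD : S → D → ℝ) (β : S → A → ℝ)
    (hβD : ∀ s d, 0 ≤ βD s d) (hβ : ∀ s a, 0 ≤ β s a)
    (PD PDk : D → S → ℕ → A → ℝ) (P Pk : S → A → ℕ → S → ℝ)
    (hPD : ∀ d s t, 1 ≤ t → t ≤ L → IsProbVec (PD d s t))
    (hP : ∀ s a t, 1 ≤ t → t ≤ L → IsProbVec (P s a t))
    (hPDk : ∀ d s t, 1 ≤ t → t ≤ L → IsProbVec (PDk d s t))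
    (hPk : ∀ s a t, 1 ≤ t → t ≤ L → IsProbVec (Pk s a t))
    (hcloseD : ∀ d s t, 1 ≤ t → t ≤ L →
      ∑ a, |PD d s t a - PDk d s t a| ≤ min 1 (βD s d))
    (hclose : ∀ s a t, 1 ≤ t → t ≤ L →
      ∑ s', |P s a t s' - Pk s a t s'| ≤ min 1 (β s a))
    (ce : S → A → ℝ) (cc : D → ℝ) (cx : D → D → ℝ)
    (hcost : ∀ s a d d', 0 ≤ ce s a + cc d' + cx d' d ∧ ce s a + cc d' + cx d' d ≤ 1)
    (π : ℕ → S → D → D) (s : S) (d : D) :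
    switchVal PD P ce cc cx π L 1 s d - switchVal PDk Pk ce cc cx π L 1 s d
      ≤ (L : ℝ) * ∑ τ : Fin L → A × S,
          trajProb PD P π (List.ofFn τ) 1 s d * bonusCost βD β π (List.ofFn τ) 1 s d := by
  suffices key : ∀ n t, 1 ≤ t → t + n ≤ L + 1 → ∀ s d,
      switchVal PD P ce cc cx π n t s d - switchVal PDk Pk ce cc cx π n t s d
        ≤ L * expBonus PD P βD β π n t s d from key L 1 le_rfl (by omega) s d
  intro n
  induction n with
  | zero => intro t _ _ s d; simp [switchVal, expBonus, bonusCost]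
  | succ n ih =>
    intro t ht hn s d
    have htL : t ≤ L := by omega
    have hnL : (n : ℝ) + 1 ≤ L := by exact_mod_cast (by omega : n + 1 ≤ L)
    have hL0 : (0 : ℝ) ≤ L := Nat.cast_nonneg L
    have hV (s' : S) := switchVal_mem_Icc hPDk hPk hcost π n (t + 1) (by omega) (by omega) s'
      (π t s d)
    rw [expBonus_succ hPD hP βD β π n t ht hn, switchVal, switchVal,
      ← (hPD (π t s d) s t ht htL).sum_mul_const_add,
      ← (hPDk (π t s d) s t ht htL).sum_mul_const_add, mul_add, Finset.mul_sum]
    simp only [mul_left_comm (L : ℝ)]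
    refine sum_mul_sub_sum_mul_le (hPD _ s t ht htL).1 hL0 (fun a => ?_) (hcloseD _ s t ht htL)
      fun a => ?_
    · have h1 := (hPk s a t ht htL).sum_mul_mem_Icc hV
      have h2 := hcost s a d (π t s d)
      constructor <;> linarith [h1.1, h1.2]
    · have h1 := sum_mul_sub_sum_mul_le (hP s a t ht htL).1 hL0
        (fun s' => ⟨(hV s').1, by linarith [(hV s').2]⟩) (hclose s a t ht htL)
        fun s' => ih (t + 1) (by omega) (by omega) s' (π t s d)
      simp only [mul_left_comm _ (L : ℝ), ← Finset.mul_sum] at h1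
      linarith
end

section
/- Let W be a finite nonempty set, c ≥ 0 a real number, K, H ≥ 1 natural numbers, and w : {1,…,K} × {1,…,H} → W an arbitrary array. Then Σ_{k=1}^{K} Σ_{t=1}^{H} min{ 1, c/√(max{1, N_k(w_{k,t})}) } ≤ 2H·|W| + 2√2·c·√(|W|·K·H). -/
/-!
The sum splits over the values `v`. For a fixed `v`, let `n k ≤ H` be the number of occurrences
of `v` in row `k` and `N k = ∑ j < k, n j`, so that row `k` contributes
`n k * min 1 (c / √(max 1 (N k)))`.

* While `N k < H`, bound the minimum by `1`: these rows contribute at most `2 * H` in total,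
  because `N` is below `2 * H` after the last of them.
* Once `N k ≥ H`, one row at most doubles the count, `N (k + 1) ≤ 2 * N k`, so the stale count
  costs only a factor `√2` and `n k / √(N k) ≤ 2 * √2 * (√(N (k + 1)) - √(N k))` telescopes.

Hence `v` contributes at most `2 * H + 2 * √2 * c * √(N K)` (`sum_rows_le`). Since the total
counts of all values add up to `K * H`, Cauchy–Schwarz bounds the sum of their square roots
by `√(|W| * K * H)`.
-/

open Finset

/-- Episodic count: number of occurrences of `v` among the first `k` rows
(episodes) of the array `w`, i.e. among the rows strictly before row `k`. -/
def epCount {W : Type*} [DecidableEq W] {K H : ℕ}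
    (w : Fin K → Fin H → W) (k : Fin K) (v : W) : ℕ :=
  (Finset.univ.filter (fun p : Fin K × Fin H => p.1 < k ∧ w p.1 p.2 = v)).card

/-- The telescoping step: `a` is the count before a row and `n` the increment from that row. -/
lemma div_sqrt_le_sqrt_add_sub (a n : ℝ) (ha : 0 < a) (hn : 0 ≤ n) (hna : n ≤ a) :
    n / √a ≤ 2 * √2 * (√(a + n) - √a) := by
  have hs : 0 < √a := Real.sqrt_pos.2 ha
  have h1 : √a ≤ √(a + n) := Real.sqrt_le_sqrt (by linarith)
  have h2 : √(a + n) ≤ √2 * √a := by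
    rw [← Real.sqrt_mul (by norm_num)]
    exact Real.sqrt_le_sqrt (by linarith)
  have e1 : √a ^ 2 = a := Real.sq_sqrt ha.le
  have e2 : √(a + n) ^ 2 = a + n := Real.sq_sqrt (by linarith)
  rw [div_le_iff₀ hs]
  -- `n = (√(a + n) - √a) * (√(a + n) + √a)`, and the second factor is at most `2 * √2 * √a`.
  have h3 : 0 ≤ (√(a + n) - √a) * (2 * (√2 * √a) - (√(a + n) + √a)) :=
    mul_nonneg (by linarith) (by linarith)
  nlinarith

/-- The bound for a single value, which occurs `n k ≤ H` times in row `k`. The first term is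
`min (N m) (2 * H)` rather than `2 * H` so that the induction on `m` goes through. -/
lemma sum_rows_le (n : ℕ → ℕ) (H : ℕ) (hH : 1 ≤ H) (hn : ∀ k, n k ≤ H) (c : ℝ) (hc : 0 ≤ c)
    (m : ℕ) :
    ∑ k ∈ range m, (n k : ℝ) * min 1 (c / √(max 1 ((∑ j ∈ range k, n j : ℕ) : ℝ)))
      ≤ min ((∑ j ∈ range m, n j : ℕ) : ℝ) (2 * H)
        + 2 * √2 * c * √((∑ j ∈ range m, n j : ℕ) : ℝ) := by
  induction m with
  | zero => simp
  | succ m ih =>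
    rw [sum_range_succ, sum_range_succ n, Nat.cast_add]
    generalize hN : (∑ j ∈ range m, n j) = N at *
    have hnH : (n m : ℝ) ≤ H := by exact_mod_cast hn m
    have hH1 : (1 : ℝ) ≤ H := by exact_mod_cast hH
    have hn0 : (0 : ℝ) ≤ n m := Nat.cast_nonneg _
    have hcoef : 0 ≤ 2 * √2 * c := by positivity
    have hsqrt : √(N : ℝ) ≤ √((N : ℝ) + n m) := Real.sqrt_le_sqrt (by linarith)
    rcases lt_or_ge (N : ℝ) H with h | h
    · have h1 : (n m : ℝ) * min 1 (c / √(max 1 (N : ℝ))) ≤ n m :=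
        mul_le_of_le_one_right hn0 (min_le_left _ _)
      rw [min_eq_left (by linarith : (N : ℝ) ≤ 2 * H)] at ih
      rw [min_eq_left (by linarith : (N : ℝ) + n m ≤ 2 * H)]
      have := mul_le_mul_of_nonneg_left hsqrt hcoef
      linarith
    · rw [max_eq_right (by linarith)]
      have h1 : (n m : ℝ) * min 1 (c / √(N : ℝ)) ≤ c * (n m / √(N : ℝ)) :=
        (mul_le_mul_of_nonneg_left (min_le_right _ _) hn0).trans_eq (by ring)
      have h2 := mul_le_mul_of_nonneg_left
        (div_sqrt_le_sqrt_add_sub N (n m) (by linarith) hn0 (by linarith)) hc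
      have h3 : min (N : ℝ) (2 * H) ≤ min ((N : ℝ) + n m) (2 * H) :=
        min_le_min_right _ (by linarith)
      linarith

/-- The number of occurrences of `v` in row `j` of `w`, extended by `0` to `j ≥ K` so that rows
can be indexed by `ℕ`. -/
def rowCount {W : Type*} [DecidableEq W] {K H : ℕ} (w : Fin K → Fin H → W) (v : W) (j : ℕ) : ℕ :=
  (Finset.univ.filter (fun t : Fin H => ∃ h : j < K, w ⟨j, h⟩ t = v)).card

lemma rowCount_le {W : Type*} [DecidableEq W] {K H : ℕ} (w : Fin K → Fin H → W) (v : W) (j : ℕ) :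
    rowCount w v j ≤ H :=
  (card_filter_le _ _).trans (by simp)

lemma rowCount_fin {W : Type*} [DecidableEq W] {K H : ℕ} (w : Fin K → Fin H → W) (v : W)
    (j : Fin K) : rowCount w v j = (Finset.univ.filter (fun t : Fin H => w j t = v)).card := by
  simp [rowCount]

lemma epCount_eq {W : Type*} [DecidableEq W] {K H : ℕ} (w : Fin K → Fin H → W) (k : Fin K)
    (v : W) : epCount w k v = ∑ j ∈ range k, rowCount w v j := by
  have h1 : epCount w k v = ∑ j : Fin K, if (j : ℕ) < k then rowCount w v j else 0 := by
    rw [epCount, card_filter, Fintype.sum_prod_type]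
    refine sum_congr rfl fun j _ => ?_
    rw [rowCount_fin, card_filter]
    by_cases h : j < k <;> simp [h]
  rw [h1, Fin.sum_univ_eq_sum_range (fun j => if j < (k : ℕ) then rowCount w v j else 0) K,
    ← sum_filter]
  refine sum_congr ?_ fun _ _ => rfl
  ext j
  have := k.2
  simp only [mem_filter, mem_range]
  omega

lemma sum_rowCount {W : Type*} [Fintype W] [DecidableEq W] {K H : ℕ} (w : Fin K → Fin H → W) :
    ∑ v : W, ∑ j ∈ range K, rowCount w v j = K * H := by
  rw [sum_comm, ← Fin.sum_univ_eq_sum_range (fun j => ∑ v : W, rowCount w v j) K]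
  have h (j : Fin K) : ∑ v : W, rowCount w v j = H := by
    simp only [rowCount_fin]
    rw [← card_eq_sum_card_fiberwise (fun _ _ => mem_coe.2 (mem_univ _))]
    simp
  simp [h]

/-- For any array `w` of `K` episodes of length `H` with values
in a finite set `W`, and any constant `c ≥ 0`,
`Σ_{k,t} min{1, c/√(max{1, N_k(w_{k,t})})} ≤ 2H|W| + 2√2·c·√(|W|KH)`. -/
theorem episodic_count_sum_bound {W : Type*} [Fintype W] [Nonempty W] [DecidableEq W]
    (K H : ℕ) (hK : 1 ≤ K) (hH : 1 ≤ H)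
    (c : ℝ) (hc : 0 ≤ c) (w : Fin K → Fin H → W) :
    ∑ k : Fin K, ∑ t : Fin H,
        min 1 (c / Real.sqrt (max 1 ((epCount w k (w k t) : ℝ))))
      ≤ 2 * H * (Fintype.card W : ℝ)
        + 2 * Real.sqrt 2 * c * Real.sqrt ((Fintype.card W : ℝ) * K * H) := by
  have hsplit : ∑ k : Fin K, ∑ t : Fin H, min 1 (c / √(max 1 ((epCount w k (w k t) : ℝ))))
      = ∑ v : W, ∑ k ∈ range K, (rowCount w v k : ℝ) *
          min 1 (c / √(max 1 ((∑ j ∈ range k, rowCount w v j : ℕ) : ℝ))) := by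
    refine Eq.symm (sum_comm.trans ?_)
    rw [← Fin.sum_univ_eq_sum_range (fun k => ∑ v : W, (rowCount w v k : ℝ) *
          min 1 (c / √(max 1 ((∑ j ∈ range k, rowCount w v j : ℕ) : ℝ)))) K]
    refine sum_congr rfl fun k _ => Eq.symm ?_
    simp only [← epCount_eq, rowCount_fin]
    rw [← sum_fiberwise_of_maps_to (s := univ) (t := univ) (g := w k) (fun _ _ => mem_univ _)]
    refine sum_congr rfl fun v _ => ?_
    rw [← nsmul_eq_mul, ← sum_const]
    refine sum_congr rfl fun t ht => ?_
    rw [(mem_filter.1 ht).2]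
  have hcs : ∑ v : W, √((∑ j ∈ range K, rowCount w v j : ℕ) : ℝ)
      ≤ √((Fintype.card W : ℝ) * K * H) := by
    apply Real.le_sqrt_of_sq_le
    refine sq_sum_le_card_mul_sum_sq.trans_eq ?_
    simp only [Real.sq_sqrt (Nat.cast_nonneg _)]
    rw [← Nat.cast_sum, sum_rowCount, card_univ]
    push_cast
    ring
  rw [hsplit]
  calc _ ≤ ∑ v : W, ((2 * H : ℝ)
          + 2 * √2 * c * √((∑ j ∈ range K, rowCount w v j : ℕ) : ℝ)) :=
        sum_le_sum fun v _ => (sum_rows_le _ H hH (rowCount_le w v) c hc K).trans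
          (add_le_add_left (min_le_right _ _) _)
    _ = 2 * H * (Fintype.card W : ℝ)
          + 2 * √2 * c * ∑ v : W, √((∑ j ∈ range K, rowCount w v j : ℕ) : ℝ) := by
        rw [sum_add_distrib, mul_sum, sum_const, card_univ, nsmul_eq_mul]
        ring
    _ ≤ _ := by gcongr
end

section
/- Let W be a finite nonempty set, K, H ≥ 1 natural numbers, and w : {1,…,K} × {1,…,H} → W an arbitrary array. Then the number of indices whose episodic count is still small satisfies Σ_{k=1}^{K} Σ_{t=1}^{H} 1[ N_k(w_{k,t}) ≤ H ] ≤ 2H·|W|. -/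
open Finset

/-!
Fix a value `v` and let `k` be the last row containing an index of value `v` whose count is still
at most `H`. All such indices lie either strictly before row `k`, where `v` occurs
`epCount w k v ≤ H` times in total, or in row `k` itself, which has only `H` entries. Hence each
value accounts for at most `2H` indices, and summing over the fibres of `w` gives the bound.
-/

/-- Each value `v` contributes at most `2H` indices of small count. -/
lemma card_small_fiber_le {W : Type*} [DecidableEq W] {K H : ℕ}
    (w : Fin K → Fin H → W) (v : W) :
    (univ.filter (fun p : Fin K × Fin H => w p.1 p.2 = v ∧ epCount w p.1 v ≤ H)).card
      ≤ 2 * H := by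
  set S := univ.filter (fun p : Fin K × Fin H => w p.1 p.2 = v ∧ epCount w p.1 v ≤ H) with hS
  rcases S.eq_empty_or_nonempty with h | h
  · simp [h]
  obtain ⟨q, hq, hmax⟩ := S.exists_max_image (fun p => p.1) h
  have hqH : epCount w q.1 v ≤ H := (mem_filter.mp hq).2.2
  have hsub : S ⊆ univ.filter (fun p : Fin K × Fin H => p.1 < q.1 ∧ w p.1 p.2 = v)
      ∪ ({q.1} ×ˢ (univ : Finset (Fin H))) := by
    intro p hp
    have hpv : w p.1 p.2 = v := (mem_filter.mp hp).2.1
    rcases (hmax p hp).lt_or_eq with hlt | heq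
    · exact mem_union_left _ (mem_filter.mpr ⟨mem_univ _, hlt, hpv⟩)
    · exact mem_union_right _ (mem_product.mpr ⟨mem_singleton.mpr heq, mem_univ _⟩)
  have hrow : (({q.1} : Finset (Fin K)) ×ˢ (univ : Finset (Fin H))).card = H := by
    simp
  have hcard := (card_le_card hsub).trans (card_union_le _ _)
  rw [hrow] at hcard
  unfold epCount at hqH
  omega

/-- The number of indices whose episodic count is still small
satisfies `Σ_{k,t} 1[N_k(w_{k,t}) ≤ H] ≤ 2H|W|`. -/
theorem small_count_indices_bound {W : Type*} [Fintype W] [Nonempty W] [DecidableEq W]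
    (K H : ℕ) (hK : 1 ≤ K) (hH : 1 ≤ H) (w : Fin K → Fin H → W) :
    ∑ k : Fin K, ∑ t : Fin H,
        (if epCount w k (w k t) ≤ H then (1 : ℝ) else 0)
      ≤ 2 * H * (Fintype.card W : ℝ) := by
  have hnat : (univ.filter
      (fun p : Fin K × Fin H => epCount w p.1 (w p.1 p.2) ≤ H)).card
      ≤ 2 * H * Fintype.card W := by
    rw [← card_univ (α := W)]
    refine card_le_mul_card_image_of_maps_to (f := fun p : Fin K × Fin H => w p.1 p.2)
      (fun _ _ => mem_univ _) (2 * H) fun v _ => ?_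
    refine (card_le_card fun p hp => ?_).trans (card_small_fiber_le w v)
    simp only [mem_filter, mem_univ, true_and] at hp ⊢
    exact ⟨hp.2, hp.2 ▸ hp.1⟩
  rw [← Fintype.sum_prod_type'
    (f := fun k t => if epCount w k (w k t) ≤ H then (1 : ℝ) else 0), sum_boole]
  exact_mod_cast hnat
end

section
/- Let W be a finite nonempty set, T ≥ 1 a natural number, and u : {1,…,T} → W any sequence. For each τ let m_τ := #{ σ : 1 ≤ σ < τ, u_σ = u_τ } be the number of earlier occurrences of u_τ. Then Σ_{τ=1}^{T} 1/√(m_τ + 1) ≤ 2·√(|W|·T). -/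
/-!
The occurrences of a fixed `w` contribute `1/√1 + 1/√2 + ⋯ + 1/√N_w ≤ 2√N_w`, where `N_w` is the
total number of occurrences of `w`. This follows from `1/√(n+1) ≤ 2(√(n+1) - √n)`
(`two_sqrt_add_inv_sqrt_succ_le`), applied one position at a time, in increasing order
(`sum_inv_sqrt_le_sum_sqrt_card`). Since `∑ N_w = T`, the Cauchy–Schwarz inequality gives
`∑ √N_w ≤ √(|W| T)`.
-/

open Finset

/-- Number of occurrences of `u τ` strictly before position `τ` in the
sequence `u`. -/
def prevCount {W : Type*} [DecidableEq W] {T : ℕ} (u : Fin T → W) (τ : Fin T) : ℕ :=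
  (Finset.univ.filter (fun σ : Fin T => σ < τ ∧ u σ = u τ)).card

theorem two_sqrt_add_inv_sqrt_succ_le (n : ℕ) :
    2 * Real.sqrt n + 1 / Real.sqrt ((n : ℝ) + 1) ≤ 2 * Real.sqrt ((n : ℝ) + 1) := by
  have hs : 0 < Real.sqrt ((n : ℝ) + 1) := Real.sqrt_pos.2 (by positivity)
  have hs2 := Real.sq_sqrt (show (0 : ℝ) ≤ (n : ℝ) + 1 by positivity)
  have hr2 := Real.sq_sqrt (show (0 : ℝ) ≤ (n : ℝ) by positivity)
  have h : 1 / Real.sqrt ((n : ℝ) + 1) ≤ 2 * (Real.sqrt ((n : ℝ) + 1) - Real.sqrt n) := by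
    rw [div_le_iff₀ hs]
    nlinarith [sq_nonneg (Real.sqrt ((n : ℝ) + 1) - Real.sqrt n)]
  linarith

/-- The bound by `∑ 2√N_w` for the positions in an arbitrary finite set `S`, with all counts taken
inside `S`; this generality lets the induction add a new largest position. -/
theorem sum_inv_sqrt_le_sum_sqrt_card {ι W : Type*} [LinearOrder ι] [Fintype W] [DecidableEq W]
    (u : ι → W) (S : Finset ι) :
    ∑ τ ∈ S, 1 / Real.sqrt (((S.filter (fun σ => σ < τ ∧ u σ = u τ)).card : ℝ) + 1)
      ≤ ∑ w : W, 2 * Real.sqrt ((S.filter (fun σ => u σ = w)).card : ℝ) := by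
  induction S using Finset.induction_on_max with
  | empty => simp
  | insert a S ha ih =>
    have haS : a ∉ S := fun h => lt_irrefl a (ha a h)
    -- The new position `a` is no predecessor of any old one, and all of `S` precedes it.
    have hold : ∀ τ ∈ S, (insert a S).filter (fun σ => σ < τ ∧ u σ = u τ)
        = S.filter (fun σ => σ < τ ∧ u σ = u τ) := fun τ hτ => by
      rw [Finset.filter_insert, if_neg (fun h => lt_asymm h.1 (ha τ hτ))]
    have hnew : (insert a S).filter (fun σ => σ < a ∧ u σ = u a)
        = S.filter (fun σ => u σ = u a) := by
      rw [Finset.filter_insert, if_neg (fun h => lt_irrefl a h.1)]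
      exact Finset.filter_congr fun σ hσ => by simp [ha σ hσ]
    have hcard : ((insert a S).filter (fun σ => u σ = u a)).card
        = (S.filter (fun σ => u σ = u a)).card + 1 := by
      rw [Finset.filter_insert, if_pos rfl, Finset.card_insert_of_notMem (by simp [haS])]
    have hother : ∀ w ∈ (Finset.univ : Finset W).erase (u a),
        2 * Real.sqrt (((insert a S).filter (fun σ => u σ = w)).card : ℝ)
          = 2 * Real.sqrt ((S.filter (fun σ => u σ = w)).card : ℝ) := fun w hw => by
      rw [Finset.filter_insert, if_neg (Finset.ne_of_mem_erase hw).symm]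
    rw [Finset.sum_insert haS, hnew, Finset.sum_congr rfl fun τ hτ => by rw [hold τ hτ],
      ← Finset.add_sum_erase _ _ (Finset.mem_univ (u a)), Finset.sum_congr rfl hother, hcard]
    rw [← Finset.add_sum_erase _ _ (Finset.mem_univ (u a))] at ih
    push_cast
    linarith [two_sqrt_add_inv_sqrt_succ_le (S.filter (fun σ => u σ = u a)).card]

/-- For any `W`-valued sequence of length `T`,
`Σ_{τ=1}^{T} 1/√(m_τ + 1) ≤ 2√(|W|·T)`, where `m_τ` counts the earlier
occurrences of `u_τ`. -/
theorem inv_sqrt_count_sum_bound {W : Type*} [Fintype W] [Nonempty W] [DecidableEq W]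
    (T : ℕ) (hT : 1 ≤ T) (u : Fin T → W) :
    ∑ τ : Fin T, 1 / Real.sqrt ((prevCount u τ : ℝ) + 1)
      ≤ 2 * Real.sqrt ((Fintype.card W : ℝ) * T) := by
  refine (sum_inv_sqrt_le_sum_sqrt_card u Finset.univ).trans ?_
  rw [← Finset.mul_sum]
  refine mul_le_mul_of_nonneg_left (Real.le_sqrt_of_sq_le ?_) zero_le_two
  have hT' : ∑ w : W, ((Finset.univ.filter (fun σ => u σ = w)).card : ℝ) = T := by
    have h := Finset.card_eq_sum_card_fiberwise (f := u) (s := Finset.univ) (t := Finset.univ)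
      (fun _ _ => Finset.mem_coe.2 (Finset.mem_univ _))
    rw [Finset.card_univ, Fintype.card_fin] at h
    exact_mod_cast h.symm
  refine sq_sum_le_card_mul_sum_sq.trans_eq ?_
  simp only [Real.sq_sqrt (Nat.cast_nonneg _), hT', Finset.card_univ]
end

section
/- Let m ≥ 1 be a natural number, b ∈ ℝ^m with b_i ≥ 0 for all i and Σ_{i=1}^m b_i = 1, let d ≥ 0 be a real number, and let 0 ≤ w_1 ≤ w_2 ≤ … ≤ w_m be real weights. Define x* ∈ ℝ^m by x*_1 := min{1, b_1 + d/2} and, recursively for i = 2,…,m, x*_i := min{ b_i, 1 − Σ_{l=1}^{i−1} x*_l }. Then x* is feasible, i.e. x*_i ≥ 0 for all i, Σ_{i=1}^m x*_i = 1 and Σ_{i=1}^m |x*_i − b_i| ≤ d, and x* is optimal: every x ∈ ℝ^m with x_i ≥ 0 for all i, Σ_{i=1}^m x_i = 1 and Σ_{i=1}^m |x_i − b_i| ≤ d satisfies Σ_{i=1}^m x_i·w_i ≥ Σ_{i=1}^m x*_i·w_i. -/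
/-!
The partial sums of `x*` have the closed form `S k = min 1 (B k + d / 2)` for `k ≥ 1`, where `B k`
is the `k`-th partial sum of `b` (`lpPsum_succ_eq`). For a feasible `x`, mass is conserved, so the
first `k` coordinates can gain at most half of the `ℓ¹` budget: `∑ i < k, x i ≤ B k + d / 2`.
Hence every partial sum of `x` is at most that of `x*`, and since the weights are nondecreasing,
summation by parts (`sum_mul_le_of_partial_sums_nonneg`) turns this into optimality.
For feasibility, `x*` exceeds `b` only in coordinate `0`, by at most `d / 2`, so its `ℓ¹` distance
from `b` is twice that excess.
-/

open Finset

/-- Partial sums of the optimal solution of the inner linear program: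
`lpPsum b d i = Σ_{l < i} x*_l`, where `x*_0 = min{1, b_0 + d/2}` and
`x*_i = min{b_i, 1 − Σ_{l<i} x*_l}` for `i ≥ 1`. -/
noncomputable def lpPsum (b : ℕ → ℝ) (d : ℝ) : ℕ → ℝ
  | 0 => 0
  | 1 => min 1 (b 0 + d / 2)
  | n + 2 => lpPsum b d (n + 1) + min (b (n + 1)) (1 - lpPsum b d (n + 1))

/-- Optimal solution of the inner linear program:
`x*_0 = min{1, b_0 + d/2}` and, for `i ≥ 1`, `x*_i = min{b_i, 1 − Σ_{l<i} x*_l}`. -/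
noncomputable def lpXstar (b : ℕ → ℝ) (d : ℝ) (i : ℕ) : ℝ :=
  lpPsum b d (i + 1) - lpPsum b d i

theorem lpPsum_succ_eq (b : ℕ → ℝ) (d : ℝ) (m : ℕ) (hb : ∀ i < m, 0 ≤ b i) (k : ℕ) (hk : k < m) :
    lpPsum b d (k + 1) = min 1 (∑ i ∈ Finset.range (k + 1), b i + d / 2) := by
  induction k with
  | zero => simp [lpPsum]
  | succ k ih =>
    have h0 := hb (k + 1) hk
    rw [lpPsum, ih (by omega), Finset.sum_range_succ _ (k + 1)]
    grind

theorem sum_lpXstar (b : ℕ → ℝ) (d : ℝ) (k : ℕ) :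
    ∑ i ∈ Finset.range k, lpXstar b d i = lpPsum b d k := by
  simp only [lpXstar, Finset.sum_range_sub, lpPsum, sub_zero]

/-- Summation by parts as an inequality: if the partial sums of `c` are nonnegative, then
replacing each weight by the largest one can only increase the weighted sum. -/
theorem sum_mul_le_of_partial_sums_nonneg (c w : ℕ → ℝ) (n : ℕ)
    (hc : ∀ k ≤ n, 0 ≤ ∑ i ∈ Finset.range k, c i) (hw : ∀ i < n, w i ≤ w (i + 1)) :
    ∑ i ∈ Finset.range (n + 1), c i * w i ≤ (∑ i ∈ Finset.range (n + 1), c i) * w n := by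
  induction n with
  | zero => simp
  | succ n ih =>
    have h1 := ih (fun k hk => hc k (by omega)) (fun i hi => hw i (by omega))
    have h2 := mul_le_mul_of_nonneg_left (hw n (by omega)) (hc (n + 1) le_rfl)
    rw [Finset.sum_range_succ _ (n + 1), Finset.sum_range_succ c (n + 1), add_mul]
    linarith

/-- A perturbation of total mass `0` and `ℓ¹` norm at most `d` adds at most `d / 2` to any
initial segment, since whatever is gained there is lost on the complementary segment. -/
theorem partial_sum_le_half (y : ℕ → ℝ) (d : ℝ) (m k : ℕ) (hk : k ≤ m)
    (h0 : ∑ i ∈ Finset.range m, y i = 0) (h1 : ∑ i ∈ Finset.range m, |y i| ≤ d) :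
    ∑ i ∈ Finset.range k, y i ≤ d / 2 := by
  rw [← Finset.sum_range_add_sum_Ico _ hk] at h0 h1
  have h2 := (le_abs_self _).trans (Finset.abs_sum_le_sum_abs y (Finset.range k))
  have h3 := (neg_le_abs _).trans (Finset.abs_sum_le_sum_abs y (Finset.Ico k m))
  linarith

/-- The explicitly constructed `x*` is feasible for the
linear program `min Σ x_i w_i` over the probability simplex intersected with
the ℓ¹ ball of radius `d` around `b` (weights `w` sorted nondecreasingly), and
it is optimal. (Coordinates are indexed by `0,…,m−1`.) -/
theorem lp_explicit_solution (m : ℕ) (hm : 1 ≤ m)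
    (b : ℕ → ℝ) (hb : ∀ i < m, 0 ≤ b i) (hbsum : ∑ i ∈ Finset.range m, b i = 1)
    (d : ℝ) (hd : 0 ≤ d)
    (w : ℕ → ℝ) (hw0 : ∀ i < m, 0 ≤ w i)
    (hwmono : ∀ i j, i ≤ j → j < m → w i ≤ w j) :
    (∀ i < m, 0 ≤ lpXstar b d i) ∧
    (∑ i ∈ Finset.range m, lpXstar b d i = 1) ∧
    (∑ i ∈ Finset.range m, |lpXstar b d i - b i| ≤ d) ∧
    (∀ x : ℕ → ℝ, (∀ i < m, 0 ≤ x i) → ∑ i ∈ Finset.range m, x i = 1 →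
      ∑ i ∈ Finset.range m, |x i - b i| ≤ d →
      ∑ i ∈ Finset.range m, lpXstar b d i * w i ≤ ∑ i ∈ Finset.range m, x i * w i) := by
  obtain ⟨n, rfl⟩ : ∃ n, m = n + 1 := ⟨m - 1, by omega⟩
  have hS := lpPsum_succ_eq b d (n + 1) hb
  have hX0 : lpXstar b d 0 = min 1 (b 0 + d / 2) := by simp [lpXstar, lpPsum]
  have hXs : ∀ i, lpXstar b d (i + 1) = min (b (i + 1)) (1 - lpPsum b d (i + 1)) := by
    intro i
    simp [lpXstar, lpPsum]
  have hsum : ∑ i ∈ Finset.range (n + 1), lpXstar b d i = 1 := by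
    rw [sum_lpXstar, hS n (by omega), hbsum]
    exact min_eq_left (by linarith)
  have hb0 : b 0 ≤ 1 := by
    rw [← hbsum]
    exact Finset.single_le_sum (f := b) (fun i hi => hb i (Finset.mem_range.mp hi)) (by simp)
  refine ⟨?_, hsum, ?_, ?_⟩
  · rintro (_ | i) hi
    · rw [hX0]
      exact le_min zero_le_one (by linarith [hb 0 hi])
    · rw [hXs, hS i (by omega)]
      exact le_min (hb _ hi) (sub_nonneg.mpr (min_le_left _ _))
  · have h0 : |lpXstar b d 0 - b 0| = lpXstar b d 0 - b 0 := by
      apply abs_of_nonneg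
      rw [hX0, sub_nonneg]
      exact le_min hb0 (by linarith)
    have h1 : ∀ i ∈ Finset.range n,
        |lpXstar b d (i + 1) - b (i + 1)| = b (i + 1) - lpXstar b d (i + 1) := by
      intro i _
      rw [abs_of_nonpos, neg_sub]
      rw [hXs, sub_nonpos]
      exact min_le_left _ _
    have h2 : lpXstar b d 0 ≤ b 0 + d / 2 := hX0 ▸ min_le_right _ _
    rw [Finset.sum_range_succ'] at hsum hbsum ⊢
    rw [Finset.sum_congr rfl h1, Finset.sum_sub_distrib, h0]
    linarith
  · intro x hx hxsum hxd
    have key := sum_mul_le_of_partial_sums_nonneg (fun i => lpXstar b d i - x i) w n ?_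
      (fun i hi => hwmono i (i + 1) (by omega) (by omega))
    · simp only [sub_mul, Finset.sum_sub_distrib, hsum, hxsum, sub_self, zero_mul] at key
      linarith
    · rintro (_ | k) hk
      · simp
      · rw [Finset.sum_sub_distrib, sum_lpXstar, hS k (by omega), sub_nonneg]
        refine le_min ?_ ?_
        · rw [← hxsum]
          exact Finset.sum_le_sum_of_subset_of_nonneg
            (Finset.range_subset_range.mpr (by omega))
            (fun i hi _ => hx i (Finset.mem_range.mp hi))
        · have h := partial_sum_le_half (fun i => x i - b i) d (n + 1) (k + 1) (by omega)
            (by rw [Finset.sum_sub_distrib, hxsum, hbsum, sub_self]) hxd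
          rw [Finset.sum_sub_distrib] at h
          linarith
end
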